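/- For any aggregation φ and any f₀ : S × A → ℝ, ‖f₀ − T_φ^μ f₀‖_∞ ≤ (1 + γ) ‖f₀ − Q⋆‖_∞ + 2 ε_φ, where ε_φ := min_{g ∈ G_φ} ‖g − Q⋆‖_∞; consequently also ‖f₀ − T_φ^μ f₀‖_{2,μ} ≤ (1 + γ) ‖f₀ − Q⋆‖_∞ + 2 ε_φ. -/

import Mathlib

/-- `V_f(s) := max_a f(s,a)`. -/
noncomputable def Vof {S A : Type*} [Fintype A] [Nonempty A]
    (f : S × A → ℝ) (s : S) : ℝ :=
  Finset.univ.sup' Finset.univ_nonempty (fun a => f (s, a))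

/-- The Bellman optimality operator `(T f)(s,a) = R(s,a) + γ ∑ s', P(s'|s,a) V_f(s')`. -/
noncomputable def bellmanT {S A : Type*} [Fintype S] [Fintype A] [Nonempty A]
    (P : S → A → S → ℝ) (R : S → A → ℝ) (γ : ℝ) (f : S × A → ℝ) : S × A → ℝ :=
  fun q => R q.1 q.2 + γ * ∑ s', P q.1 q.2 s' * Vof f s'

/-- The projected Bellman operator `T_φ^μ`, which averages `T f` over each
aggregation cell with weights proportional to `μ`. -/
noncomputable def projT {S A X : Type*} [Fintype S] [Fintype A] [Nonempty A]
    [DecidableEq X]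
    (P : S → A → S → ℝ) (R : S → A → ℝ) (γ : ℝ)
    (μ : S × A → ℝ) (φ : S × A → X) (f : S × A → ℝ) : S × A → ℝ :=
  fun q => (∑ q', if φ q' = φ q then μ q' * bellmanT P R γ f q' else 0)
         / (∑ q', if φ q' = φ q then μ q' else 0)

/-- `‖f‖_∞ = max_{s,a} |f(s,a)|`. -/
noncomputable def supNorm {S A : Type*} [Fintype S] [Fintype A] [Nonempty S] [Nonempty A]
    (f : S × A → ℝ) : ℝ :=
  Finset.univ.sup' Finset.univ_nonempty (fun q => |f q|)

/-- A function is piecewise constant with respect to an aggregation `φ` if it is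
constant on each aggregation cell; `G_φ` is the class of such functions. -/
def PiecewiseConst {S A X : Type*} (φ : S × A → X) (g : S × A → ℝ) : Prop :=
  ∀ q q' : S × A, φ q = φ q' → g q = g q'

/-- `‖f‖_{2,ν} := (∑_{s,a} ν(s,a) f(s,a)²)^{1/2}`. -/
noncomputable def l2Norm {S A : Type*} [Fintype S] [Fintype A]
    (ν f : S × A → ℝ) : ℝ :=
  Real.sqrt (∑ q : S × A, ν q * (f q) ^ 2)

/-!
Averaging over the cells of an aggregation never increases the sup-distance to a function `g` which
is constant on the cells, because every closed ball around the value of `g` on a cell is convex.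
Applied to `T f`, with `T` a `γ`-contraction fixing `Q`, this bounds the distance from `g` to the
projected backup by `dist g (T f) ≤ dist g Q + γ * dist Q f`. The triangle inequality along
`f`, `Q`, `g` then gives the sup-norm bound, which a weighted `L²` norm of total weight at most one
inherits.
-/

open Finset

section FiniteSums

variable {ι : Type*} {s : Finset ι}

theorem sup'_le_sup'_add {α : Type*} [AddCommGroup α] [LinearOrder α] [IsOrderedAddMonoid α]
    (hs : s.Nonempty) {f g : ι → α} {C : α} (h : ∀ i ∈ s, f i ≤ g i + C) :
    s.sup' hs f ≤ s.sup' hs g + C :=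
  sup'_le hs f fun i hi => (h i hi).trans (by gcongr; exact le_sup' g hi)

theorem abs_sup'_sub_sup'_le {α : Type*} [AddCommGroup α] [LinearOrder α] [IsOrderedAddMonoid α]
    (hs : s.Nonempty) {f g : ι → α} {C : α} (h : ∀ i ∈ s, |f i - g i| ≤ C) :
    |s.sup' hs f - s.sup' hs g| ≤ C := by
  simp only [abs_sub_le_iff, sub_le_iff_le_add'] at h ⊢
  exact ⟨sup'_le_sup'_add hs fun i hi => (h i hi).1, sup'_le_sup'_add hs fun i hi => (h i hi).2⟩

theorem abs_sum_mul_le_sum_mul {K : Type*} [Ring K] [LinearOrder K] [IsOrderedRing K]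
    {w x : ι → K} {C : K} (hw : ∀ i ∈ s, 0 ≤ w i) (hx : ∀ i ∈ s, |x i| ≤ C) :
    |∑ i ∈ s, w i * x i| ≤ (∑ i ∈ s, w i) * C :=
  calc |∑ i ∈ s, w i * x i| ≤ ∑ i ∈ s, |w i * x i| := abs_sum_le_sum_abs _ _
    _ ≤ ∑ i ∈ s, w i * C := sum_le_sum fun i hi => by
      rw [abs_mul, abs_of_nonneg (hw i hi)]
      exact mul_le_mul_of_nonneg_left (hx i hi) (hw i hi)
    _ = (∑ i ∈ s, w i) * C := (sum_mul s w C).symm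

end FiniteSums

section CellAverage

variable {ι X E : Type*} [Fintype ι] [DecidableEq X]

/-- The conditional expectation of `h` given the aggregation `φ`, for the weights `μ`: its value at
`i` is the `μ`-weighted mean of `h` over the cell of `i`. On a cell of total weight zero it takes
the junk value `0`. -/
noncomputable def cellAverage [AddCommGroup E] [Module ℝ E]
    (μ : ι → ℝ) (φ : ι → X) (h : ι → E) : ι → E :=
  fun i => ({j | φ j = φ i} : Finset ι).centerMass μ h

theorem dist_cellAverage_le [SeminormedAddCommGroup E] [NormedSpace ℝ E]
    {μ : ι → ℝ} {φ : ι → X} (hμ : ∀ i, 0 ≤ μ i) (hcell : ∀ i, 0 < ∑ j with φ j = φ i, μ j)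
    {g : ι → E} (hg : g.FactorsThrough φ) (h : ι → E) :
    dist (cellAverage μ φ h) g ≤ dist h g := by
  refine (dist_pi_le_iff dist_nonneg).2 fun i => ?_
  refine (convex_closedBall (g i) (dist h g)).centerMass_mem (fun j _ => hμ j) (hcell i) ?_
  intro j hj
  rw [← hg (mem_filter_univ j |>.1 hj), Metric.mem_closedBall]
  exact dist_le_pi_dist h g j

end CellAverage

section Bellman

variable {S A X : Type*} [Fintype S] [Fintype A]

theorem supNorm_eq_norm [Nonempty S] [Nonempty A] (f : S × A → ℝ) : supNorm f = ‖f‖ :=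
  le_antisymm (sup'_le _ _ fun q _ => norm_le_pi_norm f q)
    ((pi_norm_le_iff_of_nonempty f).2 fun q => le_sup' (fun q => |f q|) (mem_univ q))

theorem l2Norm_le_norm {ν : S × A → ℝ} (hν₀ : ∀ q, 0 ≤ ν q) (hν₁ : ∑ q, ν q ≤ 1)
    (f : S × A → ℝ) : l2Norm ν f ≤ ‖f‖ := by
  refine (Real.sqrt_le_left (norm_nonneg f)).2 ?_
  have hsq : ∀ q, |f q ^ 2| ≤ ‖f‖ ^ 2 := fun q => by
    rw [abs_pow]
    exact pow_le_pow_left₀ (abs_nonneg _) (norm_le_pi_norm f q) 2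
  calc ∑ q, ν q * f q ^ 2 ≤ (∑ q, ν q) * ‖f‖ ^ 2 :=
        (le_abs_self _).trans (abs_sum_mul_le_sum_mul (fun q _ => hν₀ q) fun q _ => hsq q)
    _ ≤ ‖f‖ ^ 2 := mul_le_of_le_one_left (sq_nonneg _) hν₁

variable [Nonempty A] {P : S → A → S → ℝ} {γ : ℝ}

theorem dist_vof_le (f g : S × A → ℝ) (s : S) : dist (Vof f s) (Vof g s) ≤ dist f g :=
  abs_sup'_sub_sup'_le _ fun a _ => dist_le_pi_dist f g (s, a)

theorem dist_bellmanT_le (hP₀ : ∀ s a s', 0 ≤ P s a s') (hP₁ : ∀ s a, ∑ s', P s a s' ≤ 1)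
    (R : S → A → ℝ) (hγ : 0 ≤ γ) (f g : S × A → ℝ) :
    dist (bellmanT P R γ f) (bellmanT P R γ g) ≤ γ * dist f g := by
  refine (dist_pi_le_iff (mul_nonneg hγ dist_nonneg)).2 fun q => ?_
  calc dist (bellmanT P R γ f q) (bellmanT P R γ g q)
      = γ * |∑ s', P q.1 q.2 s' * (Vof f s' - Vof g s')| := by
        simp only [bellmanT, dist_add_left, Real.dist_eq, ← mul_sub, abs_mul, abs_of_nonneg hγ,
          ← sum_sub_distrib]
    _ ≤ γ * ((∑ s', P q.1 q.2 s') * dist f g) := by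
        gcongr
        exact abs_sum_mul_le_sum_mul (fun s' _ => hP₀ _ _ s') fun s' _ => dist_vof_le f g s'
    _ ≤ γ * dist f g := by
        gcongr
        exact mul_le_of_le_one_left dist_nonneg (hP₁ _ _)

variable [DecidableEq X] {μ : S × A → ℝ} {φ : S × A → X}

theorem projT_eq_cellAverage (P : S → A → S → ℝ) (R : S → A → ℝ) (γ : ℝ) (μ : S × A → ℝ)
    (φ : S × A → X) (f : S × A → ℝ) :
    projT P R γ μ φ f = cellAverage μ φ (bellmanT P R γ f) := by
  funext q
  simp only [projT, cellAverage, centerMass, sum_filter, smul_eq_mul, div_eq_inv_mul]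

theorem dist_self_projT_le (hP₀ : ∀ s a s', 0 ≤ P s a s') (hP₁ : ∀ s a, ∑ s', P s a s' ≤ 1)
    {R : S → A → ℝ} (hγ : 0 ≤ γ) (hμ : ∀ q, 0 ≤ μ q)
    (hcell : ∀ q, 0 < ∑ q' with φ q' = φ q, μ q')
    {Q : S × A → ℝ} (hQ : bellmanT P R γ Q = Q) {g : S × A → ℝ} (hg : PiecewiseConst φ g)
    (f : S × A → ℝ) :
    dist f (projT P R γ μ φ f) ≤ (1 + γ) * dist f Q + 2 * dist g Q := by
  have hproj : dist (projT P R γ μ φ f) g ≤ dist (bellmanT P R γ f) g :=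
    projT_eq_cellAverage P R γ μ φ f ▸ dist_cellAverage_le hμ hcell (fun {q q'} => hg q q') _
  have hbellman : dist (bellmanT P R γ f) Q ≤ γ * dist f Q := by
    simpa only [hQ] using dist_bellmanT_le hP₀ hP₁ R hγ f Q
  calc dist f (projT P R γ μ φ f)
      ≤ dist f Q + dist Q g + dist g (projT P R γ μ φ f) := dist_triangle4 _ _ _ _
    _ ≤ dist f Q + dist Q g + (dist (bellmanT P R γ f) Q + dist Q g) := by
        rw [dist_comm g]
        gcongr
        exact hproj.trans (dist_triangle _ _ _)
    _ ≤ (1 + γ) * dist f Q + 2 * dist g Q := by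
        rw [dist_comm Q g]
        linarith

end Bellman

theorem stmt13_general {S A X : Type*} [Fintype S] [Fintype A] [Nonempty S] [Nonempty A]
    [DecidableEq X] (P : S → A → S → ℝ) (R : S → A → ℝ) (γ : ℝ)
    (hP₀ : ∀ s a s', 0 ≤ P s a s') (hP₁ : ∀ s a, ∑ s', P s a s' ≤ 1) (hγ : 0 ≤ γ)
    (μ : S × A → ℝ) (hμ₀ : ∀ q, 0 ≤ μ q) (hμ₁ : ∑ q, μ q ≤ 1)
    (φ : S × A → X) (hcell : ∀ q, 0 < ∑ q' with φ q' = φ q, μ q')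
    (Q : S × A → ℝ) (hQ : bellmanT P R γ Q = Q)
    (g : S × A → ℝ) (hg : PiecewiseConst φ g) (f₀ : S × A → ℝ) :
    supNorm (fun q => f₀ q - projT P R γ μ φ f₀ q) ≤
      (1 + γ) * supNorm (fun q => f₀ q - Q q) + 2 * supNorm (fun q => g q - Q q) ∧
    l2Norm μ (fun q => f₀ q - projT P R γ μ φ f₀ q) ≤
      (1 + γ) * supNorm (fun q => f₀ q - Q q) + 2 * supNorm (fun q => g q - Q q) := by
  have hsup := dist_self_projT_le hP₀ hP₁ hγ hμ₀ hcell hQ hg f₀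
  simp only [dist_eq_norm] at hsup
  simp only [supNorm_eq_norm]
  exact ⟨hsup, (l2Norm_le_norm hμ₀ hμ₁ _).trans hsup⟩

/-- For any aggregation `φ` and any `f₀ : S × A → ℝ`,
`‖f₀ − T_φ^μ f₀‖_∞ ≤ (1 + γ)‖f₀ − Q⋆‖_∞ + 2 ε_φ`, where
`ε_φ := min_{g ∈ G_φ} ‖g − Q⋆‖_∞`; consequently the same bound holds for
`‖f₀ − T_φ^μ f₀‖_{2,μ}`. -/
theorem stmt13 {S A X : Type*} [Fintype S] [Fintype A] [Nonempty S] [Nonempty A]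
    [DecidableEq X]
    (P : S → A → S → ℝ) (R : S → A → ℝ) (Rmax γ : ℝ)
    (hP0 : ∀ s a s', 0 ≤ P s a s') (hP1 : ∀ s a, ∑ s', P s a s' = 1)
    (hR : ∀ s a, 0 ≤ R s a ∧ R s a ≤ Rmax)
    (hγ0 : 0 ≤ γ) (hγ1 : γ < 1)
    (μ : S × A → ℝ) (hμpos : ∀ q, 0 < μ q) (hμsum : ∑ q, μ q = 1)
    (φ : S × A → X)
    (Qstar : S × A → ℝ) (hQstar : bellmanT P R γ Qstar = Qstar)
    (εφ : ℝ)
    (hεφ : IsLeast {e : ℝ | ∃ g : S × A → ℝ, PiecewiseConst φ g ∧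
              supNorm (fun q => g q - Qstar q) = e} εφ)
    (f₀ : S × A → ℝ) :
    supNorm (fun q => f₀ q - projT P R γ μ φ f₀ q) ≤
      (1 + γ) * supNorm (fun q => f₀ q - Qstar q) + 2 * εφ ∧
    l2Norm μ (fun q => f₀ q - projT P R γ μ φ f₀ q) ≤
      (1 + γ) * supNorm (fun q => f₀ q - Qstar q) + 2 * εφ := by
  obtain ⟨⟨g, hg, rfl⟩, -⟩ := hεφ
  exact stmt13_general P R γ hP0 (fun s a => (hP1 s a).le) hγ0 μ (fun q => (hμpos q).le) hμsum.le φ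
    (fun q => sum_pos (fun q' _ => hμpos q') ⟨q, by simp⟩) Qstar hQstar g hg f₀
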